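/- arXiv:1611.03434 — 3 statements merged into one kernel-verified Lean document; each statement's English description precedes it below -/
import Mathlib

section
/- The following identities hold in Ω: w·d(ω) = −q² z ω̄ ω, and d(ω) = ((1 + q⁻⁴)/(q² − 1)) w² ω². -/
theorem d_omega_identities
    (q : ℝ) (hq0 : 0 < q) (hq1 : q < 1)
    {A : Type*} [Ring A] [Algebra ℂ A]
    (z w : A)
    (hzw : w * z - ((q : ℂ) ^ 2) • (z * w) = ((1 : ℂ) - (q : ℂ) ^ 2) • (1 : A))
    (x : A) (hx : x = 1 - z * w)
    (σ : A ≃ₐ[ℂ] A) (hσz : σ z = ((q : ℂ) ^ 2) • z)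
    (hσw : σ w = (((q : ℂ) ^ 2)⁻¹) • w)
    (D : A →ₗ[ℂ] A)
    (hD : ∀ a b : A, D (a * b) = D a * σ b + a * D b)
    (hDz : D z = w) (hDw : D w = 0)
    (Db : A →ₗ[ℂ] A)
    (hDb : ∀ a b : A, Db (a * b) = Db a * σ b + a * Db b)
    (hDbz : Db z = 0) (hDbw : Db w = ((q : ℂ) ^ 2) • z)
    {Ω : Type*} [Ring Ω] [Algebra ℂ Ω]
    (𝒜 : ℕ → Submodule ℂ Ω)
    (hmul : ∀ {m n : ℕ} {ξ η : Ω}, ξ ∈ 𝒜 m → η ∈ 𝒜 n → ξ * η ∈ 𝒜 (m + n))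
    (ι : A →ₐ[ℂ] Ω) (hι : Function.Injective ι)
    (hι0 : ∀ a : A, ι a ∈ 𝒜 0) (hι0' : ∀ u ∈ 𝒜 0, ∃ a : A, ι a = u)
    (d : Ω →ₗ[ℂ] Ω)
    (hdeg : ∀ {n : ℕ} {ξ : Ω}, ξ ∈ 𝒜 n → d ξ ∈ 𝒜 (n + 1))
    (hdd : ∀ ξ : Ω, d (d ξ) = 0)
    (hLeib : ∀ {n : ℕ} {ξ : Ω}, ξ ∈ 𝒜 n → ∀ η : Ω,
      d (ξ * η) = d ξ * η + ((-1 : ℂ) ^ n) • (ξ * d η))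
    (ω ωb : Ω) (hω : ω ∈ 𝒜 1) (hωb : ωb ∈ 𝒜 1)
    (hωcomm : ∀ a : A, ω * ι a = ι (σ a) * ω)
    (hωbcomm : ∀ a : A, ωb * ι a = ι (σ a) * ωb)
    (hda : ∀ a : A, d (ι a) = ι (D a) * ω + ι (Db a) * ωb)
    :
    ι w * d ω = (-((q : ℂ) ^ 2)) • (ι z * (ωb * ω)) ∧
    d ω = ((1 + ((q : ℂ) ^ 4)⁻¹) / ((q : ℂ) ^ 2 - 1)) • (ι (w ^ 2) * ω ^ 2) := by
  have hQ0 : (q : ℂ) ^ 2 ≠ 0 := by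
    exact_mod_cast (pow_pos hq0 2).ne'
  have hQ1 : (q : ℂ) ^ 2 - 1 ≠ 0 := by
    have : q ^ 2 - 1 ≠ 0 := by nlinarith
    exact_mod_cast this
  have hQ4 : (q : ℂ) ^ 4 = ((q : ℂ) ^ 2) ^ 2 := by ring
  rw [hQ4]
  generalize (q : ℂ) ^ 2 = Q at *
  have hrel : ι w * ι z - Q • (ι z * ι w) = (1 - Q) • (1 : Ω) := by
    simpa using congrArg ι hzw
  have hdz : d (ι z) = ι w * ω := by simp [hda, hDz, hDbz]
  have hdw : d (ι w) = Q • (ι z * ωb) := by simp [hda, hDw, hDbw]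
  have hωz : ω * ι z = Q • (ι z * ω) := by simp [hωcomm, hσz]
  have hωw : ω * ι w = Q⁻¹ • (ι w * ω) := by simp [hωcomm, hσw]
  have hωbz : ωb * ι z = Q • (ι z * ωb) := by simp [hωbcomm, hσz]
  have hwdω : ι w * d ω = (-Q) • (ι z * (ωb * ω)) := by
    have h := hLeib (hι0 w) ω
    rw [← hdz, hdd, hdw, pow_zero, one_smul, smul_mul_assoc, mul_assoc] at h
    rw [neg_smul]
    exact eq_neg_of_add_eq_zero_right h.symm
  refine ⟨hwdω, ?_⟩
  have hdωz : d ω * ι z = Q • (ι z * d ω) + (Q + Q⁻¹) • (ι w * ω ^ 2) := by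
    have h := congrArg d hωz
    rw [hLeib hω, map_smul, hLeib (hι0 z), hdz, ← mul_assoc ω, hωw] at h
    simp only [pow_one, pow_zero, one_smul, neg_smul, smul_mul_assoc, mul_assoc, ← sq] at h
    linear_combination (norm := module) h
  have hwdωz : ι w * d ω * ι z = Q ^ 2 • (ι z * (ι w * d ω)) := by
    rw [hwdω]
    simp only [smul_mul_assoc, mul_smul_comm, mul_assoc, hωz]
    rw [← mul_assoc ωb, hωbz]
    simp only [smul_mul_assoc, mul_smul_comm, mul_assoc, smul_smul]
    congr 1
    ring
  have hww : ι w * (ι w * ω ^ 2) = ι (w ^ 2) * ω ^ 2 := by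
    rw [map_pow, sq (ι w), mul_assoc]
  have hreldω : ι w * (ι z * d ω) = Q • (ι z * (ι w * d ω)) + (1 - Q) • d ω := by
    have h := congrArg (· * d ω) hrel
    simp only [sub_mul, smul_mul_assoc, one_mul, mul_assoc] at h
    rw [← h]
    abel
  rw [mul_assoc, hdωz, mul_add, mul_smul_comm, mul_smul_comm, hww, hreldω] at hwdωz
  have hfinal : (Q * (1 - Q)) • d ω = (-(Q + Q⁻¹)) • (ι (w ^ 2) * ω ^ 2) := by
    simp only [smul_add, smul_smul, ← sq] at hwdωz
    linear_combination (norm := module) hwdωz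
  have hne : Q * (1 - Q) ≠ 0 := mul_ne_zero hQ0 (by rwa [← neg_ne_zero, neg_sub])
  rw [← inv_smul_smul₀ hne (d ω), hfinal, smul_smul]
  congr 1
  have hQ1' : 1 - Q ≠ 0 := right_ne_zero_of_mul hne
  field_simp
  ring
end

section
/- The following identity holds in Ω²: ω² = −(q⁸/(q⁴ + 1)) z⁴ (ω̄ ω + q⁴ ω ω̄); consequently ω² (and, by conjugation, ω̄²) lies in the A-module generated by v. -/
/-- In a quantum disc algebra with parameter `p`, an element `T` which skew-commutes with the
generators and satisfies `(1 - Z * W) * W * T = 0` is fixed by `Z ^ 3 * W ^ 3`. -/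
theorem quantumDisc_fix {R : Type*} [Ring R] [Algebra ℂ R] {p : ℂ} (hp0 : p ≠ 0) (hp1 : p ≠ 1)
    {Z W T : R} (hWZ : W * Z = p • (Z * W) + (1 - p) • 1)
    (hTZ : T * Z = p ^ 2 • (Z * T))
    (hT : Z * (W * (W * T)) = W * T) :
    Z * (Z * (Z * (W * (W * (W * T))))) = T := by
  have hWZ' : ∀ u : R, W * (Z * u) = p • (Z * (W * u)) + (1 - p) • u := fun u ↦ by
    rw [← mul_assoc, hWZ]
    simp only [add_mul, smul_mul_assoc, mul_assoc, one_mul]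
  have h1 : Z * (Z * (W * (W * T))) = Z * (W * T) := by rw [hT]
  have h2 : p ^ 2 • (W * (Z * T)) = p ^ 2 • (Z * (W * (W * (Z * T)))) := by
    have := congrArg (· * Z) hT
    simp only [mul_assoc, hTZ, mul_smul_comm] at this
    exact this.symm
  replace h2 := smul_right_injective R (pow_ne_zero 2 hp0) h2
  simp only [hWZ', mul_add, mul_smul_comm, h1] at h2
  have h3 : (1 - p) • (Z * (W * T)) = (1 - p) • T := by
    linear_combination (norm := skip) -h2
    module
  replace h3 := smul_right_injective R (sub_ne_zero.2 hp1.symm) h3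
  have h4 : p • (Z * (W * (W * (W * T)))) = p • (W * (W * T)) := by
    have := congrArg (W * ·) hT
    simp only [hWZ'] at this
    linear_combination (norm := module) this
  replace h4 := smul_right_injective R hp0 h4
  simp only [h4, hT, h3]

/-- The degree-two relations of a twisted calculus on the quantum disc, with `d Z = W * α` and
`d W = Z * β`. The substitution
`(p, Z, W, α, β) ↦ (p⁻¹, W, Z, β, α)` gives the relations for `β * β`. -/
theorem quantumDisc_form_relations {R : Type*} [Ring R] [Algebra ℂ R] {p : ℂ} (hp0 : p ≠ 0)
    (hp1 : p ≠ 1) (hp2 : p ^ 2 + 1 ≠ 0) (hp3 : p ^ 3 ≠ 1) {Z W α β : R}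
    (hWZ : W * Z = p • (Z * W) + (1 - p) • 1)
    (hαZ : α * Z = p • (Z * α)) (hαW : α * W = p⁻¹ • (W * α))
    (hβZ : β * Z = p • (Z * β))
    (d : R →ₗ[ℂ] R) (hdd : ∀ u, d (d u) = 0) (hdZ : d Z = W * α) (hdW : d W = Z * β)
    (hZ : ∀ u, d (Z * u) = d Z * u + Z * d u) (hW : ∀ u, d (W * u) = d W * u + W * d u)
    (hα : ∀ u, d (α * u) = d α * u - α * d u) :
    (p ^ 2 + 1) • (α * α) = (p ^ 2 * (1 - p)) • (Z * (Z * (Z * (Z * (β * α))))) ∧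
      Z * (β * α) = -(p ^ 3 • (Z * (α * β))) := by
  have hWZ' : ∀ u : R, W * (Z * u) = p • (Z * (W * u)) + (1 - p) • u := fun u ↦ by
    rw [← mul_assoc, hWZ]
    simp only [add_mul, smul_mul_assoc, mul_assoc, one_mul]
  have hαZ' : ∀ u : R, α * (Z * u) = p • (Z * (α * u)) := fun u ↦ by
    rw [← mul_assoc, hαZ, smul_mul_assoc, mul_assoc]
  have hβZ' : ∀ u : R, β * (Z * u) = p • (Z * (β * u)) := fun u ↦ by
    rw [← mul_assoc, hβZ, smul_mul_assoc, mul_assoc]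
  have hαW' : ∀ u : R, α * (W * u) = p⁻¹ • (W * (α * u)) := fun u ↦ by
    rw [← mul_assoc, hαW, smul_mul_assoc, mul_assoc]
  have h1 : W * d α = -(Z * (β * α)) := by
    have := hdd Z
    rw [hdZ, hW, hdW, mul_assoc] at this
    exact eq_neg_of_add_eq_zero_right this
  have h2 : d α * Z = p • (Z * d α) + (p + p⁻¹) • (W * (α * α)) := by
    have := congrArg d hαZ
    rw [hα, map_smul, hZ, hdZ, hαW', mul_assoc] at this
    linear_combination (norm := skip) this
    module
  have h3 : d α * W = p • (Z * (α * β)) := by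
    have := congrArg d hαW
    rw [hα, map_smul, hW, hdW, hαZ', mul_assoc, h1] at this
    linear_combination (norm := skip) this
    module
  have hp1' : 1 - p ≠ 0 := sub_ne_zero.2 hp1.symm
  have hdα : d α = (-((p ^ 2 + 1) / (p ^ 2 * (1 - p)))) • (W * (W * (α * α))) := by
    have e := congrArg (W * ·) h2
    simp only [← mul_assoc W (d α), h1, mul_add, mul_smul_comm, hWZ', neg_mul, mul_assoc, hαZ,
      hβZ', mul_neg] at e
    linear_combination (norm := skip) (-(p * (1 - p))⁻¹) • e
    match_scalars <;> field_simp <;> ring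
  have hTZ : α * α * Z = p ^ 2 • (Z * (α * α)) := by
    simp only [mul_assoc, hαZ, hαZ', mul_smul_comm, smul_smul, sq]
  have hTW : α * α * W = (p⁻¹) ^ 2 • (W * (α * α)) := by
    simp only [mul_assoc, hαW, hαW', mul_smul_comm, smul_smul, sq]
  generalize α * α = T at *
  have hp3' : 1 - p ^ 3 ≠ 0 := sub_ne_zero.2 hp3.symm
  have hT : Z * (W * (W * T)) = W * T := by
    rw [hdα] at h2
    simp only [smul_mul_assoc, mul_assoc, hTZ, mul_smul_comm, hWZ', mul_add] at h2
    linear_combination (norm := skip) (p * (1 - p) / ((p ^ 2 + 1) * (1 - p ^ 3))) • h2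
    match_scalars <;> field_simp <;> ring
  have hfix := quantumDisc_fix hp0 hp1 hWZ hTZ hT
  rw [hdα] at h1 h3
  simp only [smul_mul_assoc, mul_assoc, hTW, mul_smul_comm] at h1 h3
  have hβα : Z * (β * α) = ((p ^ 2 + 1) / (p ^ 2 * (1 - p))) • (W * (W * (W * T))) := by
    linear_combination (norm := module) h1
  constructor
  · rw [hβα]
    simp only [mul_smul_comm, hfix]
    match_scalars
    field_simp
  · rw [hβα]
    linear_combination (norm := skip) -(p ^ 2 • h3)
    match_scalars <;> field_simp <;> ring

theorem omega_sq_formula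
    (q : ℝ) (hq0 : 0 < q) (hq1 : q < 1)
    {A : Type*} [Ring A] [Algebra ℂ A]
    (z w : A)
    (hzw : w * z - ((q : ℂ) ^ 2) • (z * w) = ((1 : ℂ) - (q : ℂ) ^ 2) • (1 : A))
    (x : A) (hx : x = 1 - z * w)
    (σ : A ≃ₐ[ℂ] A) (hσz : σ z = ((q : ℂ) ^ 2) • z)
    (hσw : σ w = (((q : ℂ) ^ 2)⁻¹) • w)
    (D : A →ₗ[ℂ] A)
    (hD : ∀ a b : A, D (a * b) = D a * σ b + a * D b)
    (hDz : D z = w) (hDw : D w = 0)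
    (Db : A →ₗ[ℂ] A)
    (hDb : ∀ a b : A, Db (a * b) = Db a * σ b + a * Db b)
    (hDbz : Db z = 0) (hDbw : Db w = ((q : ℂ) ^ 2) • z)
    {Ω : Type*} [Ring Ω] [Algebra ℂ Ω]
    (𝒜 : ℕ → Submodule ℂ Ω)
    (hmul : ∀ {m n : ℕ} {ξ η : Ω}, ξ ∈ 𝒜 m → η ∈ 𝒜 n → ξ * η ∈ 𝒜 (m + n))
    (ι : A →ₐ[ℂ] Ω) (hι : Function.Injective ι)
    (hι0 : ∀ a : A, ι a ∈ 𝒜 0) (hι0' : ∀ u ∈ 𝒜 0, ∃ a : A, ι a = u)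
    (d : Ω →ₗ[ℂ] Ω)
    (hdeg : ∀ {n : ℕ} {ξ : Ω}, ξ ∈ 𝒜 n → d ξ ∈ 𝒜 (n + 1))
    (hdd : ∀ ξ : Ω, d (d ξ) = 0)
    (hLeib : ∀ {n : ℕ} {ξ : Ω}, ξ ∈ 𝒜 n → ∀ η : Ω,
      d (ξ * η) = d ξ * η + ((-1 : ℂ) ^ n) • (ξ * d η))
    (ω ωb : Ω) (hω : ω ∈ 𝒜 1) (hωb : ωb ∈ 𝒜 1)
    (hωcomm : ∀ a : A, ω * ι a = ι (σ a) * ω)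
    (hωbcomm : ∀ a : A, ωb * ι a = ι (σ a) * ωb)
    (hda : ∀ a : A, d (ι a) = ι (D a) * ω + ι (Db a) * ωb)
    (v : Ω)
    (hv : v = ((((q : ℂ) ^ 6)⁻¹) / ((q : ℂ) ^ 2 - 1)) • (ωb * ω + ((q : ℂ) ^ 8) • (ω * ωb)))
    :
    ω ^ 2 = (-((q : ℂ) ^ 8 / ((q : ℂ) ^ 4 + 1))) • (ι (z ^ 4) * (ωb * ω + ((q : ℂ) ^ 4) • (ω * ωb))) ∧
    (∃ a : A, ω ^ 2 = ι a * v) ∧ (∃ a : A, ωb ^ 2 = ι a * v) := by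
  generalize hp : (q : ℂ) ^ 2 = p at *
  have hq4 : (q : ℂ) ^ 4 = p ^ 2 := by rw [← hp]; ring
  have hq6 : (q : ℂ) ^ 6 = p ^ 3 := by rw [← hp]; ring
  have hq8 : (q : ℂ) ^ 8 = p ^ 4 := by rw [← hp]; ring
  rw [hq6, hq8] at hv
  rw [hq4, hq8]
  have hpr : p = ((q ^ 2 : ℝ) : ℂ) := by rw [← hp]; push_cast; rfl
  have hr0 : 0 < q ^ 2 := by positivity
  have hr1 : q ^ 2 < 1 := by nlinarith
  have hp0 : p ≠ 0 := by rw [hpr]; exact_mod_cast hr0.ne'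
  have hp1 : p ≠ 1 := by rw [hpr]; exact_mod_cast hr1.ne
  have hp2 : p ^ 2 + 1 ≠ 0 := by rw [hpr]; norm_cast; positivity
  have hp3 : p ^ 3 ≠ 1 := by
    rw [hpr]; exact_mod_cast (pow_lt_one₀ hr0.le hr1 (by norm_num)).ne
  have hp1' : p - 1 ≠ 0 := sub_ne_zero.2 hp1
  have hWZ : ι w * ι z = p • (ι z * ι w) + (1 - p) • 1 := by
    have := congrArg ι hzw
    simp only [map_sub, map_mul, map_smul, map_one] at this
    linear_combination (norm := module) this
  have hZW : ι z * ι w = p⁻¹ • (ι w * ι z) + (1 - p⁻¹) • 1 := by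
    rw [hWZ]
    match_scalars <;> field_simp <;> ring
  have hωz : ω * ι z = p • (ι z * ω) := by
    rw [hωcomm, hσz, map_smul, smul_mul_assoc]
  have hωw : ω * ι w = p⁻¹ • (ι w * ω) := by
    rw [hωcomm, hσw, map_smul, smul_mul_assoc]
  have hωbz : (p • ωb) * ι z = p • (ι z * (p • ωb)) := by
    rw [smul_mul_assoc, hωbcomm, hσz, map_smul, smul_mul_assoc, mul_smul_comm]
  have hωbw : (p • ωb) * ι w = p⁻¹ • (ι w * (p • ωb)) := by
    rw [smul_mul_assoc, hωbcomm, hσw, map_smul, smul_mul_assoc, mul_smul_comm, smul_comm]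
  have hdz : d (ι z) = ι w * ω := by simp [hda, hDz, hDbz]
  have hdw : d (ι w) = ι z * (p • ωb) := by simp [hda, hDw, hDbw]
  have hd0 (a : A) (u : Ω) : d (ι a * u) = d (ι a) * u + ι a * d u := by
    simpa using hLeib (hι0 a) u
  have hd1 {ξ : Ω} (hξ : ξ ∈ 𝒜 1) (u : Ω) : d (ξ * u) = d ξ * u - ξ * d u := by
    simpa [sub_eq_add_neg] using hLeib hξ u
  obtain ⟨hω2, hzrel⟩ := quantumDisc_form_relations hp0 hp1 hp2 hp3 hWZ hωz hωw hωbz d hdd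
    hdz hdw (hd0 z) (hd0 w) (hd1 hω)
  have hp2' : p⁻¹ ^ 2 + 1 ≠ 0 := by
    rw [show p⁻¹ ^ 2 + 1 = (p ^ 2 + 1) / p ^ 2 by field_simp; ring]
    exact div_ne_zero hp2 (pow_ne_zero 2 hp0)
  obtain ⟨hωb2, hwrel⟩ := quantumDisc_form_relations (inv_ne_zero hp0) (by simpa using hp1) hp2'
    (by simpa using hp3) hZW hωbw (by rwa [inv_inv]) hωw d hdd
    hdw hdz (hd0 w) (hd0 z) (hd1 ((𝒜 1).smul_mem p hωb))
  simp only [smul_mul_assoc, mul_smul_comm] at hω2 hzrel hωb2 hwrel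
  have hzrel4 := congrArg (fun u ↦ ι z * (ι z * (ι z * u))) hzrel
  have hwrel4 := congrArg (fun u ↦ ι w * (ι w * (ι w * u))) hwrel
  simp only [mul_smul_comm, mul_neg] at hzrel4 hwrel4
  refine ⟨?_, ⟨(-(p ^ 6 * (1 - p) / (p ^ 2 + 1))) • z ^ 4, ?_⟩,
    ⟨((p - 1) / (p ^ 2 * (p ^ 2 + 1))) • w ^ 4, ?_⟩⟩
  · simp only [map_mul, pow_succ, pow_zero, one_mul, mul_assoc, mul_add, mul_smul_comm]
    linear_combination (norm := skip)
      (p ^ 2 + 1)⁻¹ • hω2 + (p ^ 2 / (p ^ 2 + 1)) • hzrel4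
    match_scalars <;> field_simp <;> ring
  · rw [hv]
    simp only [map_smul, map_mul, pow_succ, pow_zero, one_mul, mul_assoc, mul_add, mul_smul_comm,
      smul_mul_assoc]
    linear_combination (norm := skip)
      (p ^ 2 + 1)⁻¹ • hω2 + (-(p ^ 3 / (p ^ 2 + 1))) • hzrel4
    match_scalars <;> field_simp <;> ring
  · rw [hv]
    simp only [map_smul, map_mul, pow_succ, pow_zero, one_mul, mul_assoc, mul_add, mul_smul_comm,
      smul_mul_assoc]
    linear_combination (norm := skip)
      (p ^ 2 + 1)⁻¹ • hωb2 + (-(1 / (p ^ 3 * (p ^ 2 + 1)))) • hwrel4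
    match_scalars <;> field_simp <;> ring
end

section
/- The following identities hold in Ω²: d(ω) = q⁸ z² v, d(ω̄) = −w² v, ω ω̄ = v, ω̄ ω = −q⁶ v, ω² = q¹² ((q² − 1)/(q⁴ + 1)) z⁴ v, and ω̄² = q⁻⁴ ((q² − 1)/(q⁴ + 1)) w⁴ v. -/
section QuantumDisc

variable {K Ω : Type*} [Field K] [Ring Ω] [Algebra K Ω] {P : K} {Z W : Ω}

/-- The quantum disc relation, as a rule for reordering a left action. -/
lemma quantumDisc_mul_mul (hWZ : W * Z = P • (Z * W) + (1 - P) • (1 : Ω)) (m : Ω) :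
    W * (Z * m) = P • (Z * (W * m)) + (1 - P) • m := by
  rw [← mul_assoc, hWZ]
  simp only [add_mul, smul_mul_assoc, one_mul, mul_assoc]

/-- The quantum disc relation is preserved by exchanging the generators and inverting `P`. -/
lemma quantumDisc_swap (hP0 : P ≠ 0) (hWZ : W * Z = P • (Z * W) + (1 - P) • (1 : Ω)) :
    Z * W = P⁻¹ • (W * Z) + (1 - P⁻¹) • (1 : Ω) := by
  rw [hWZ]
  match_scalars <;> field_simp
  ring

lemma quantumDisc_eq_zero (hP1 : P ≠ 1) (hWZ : W * Z = P • (Z * W) + (1 - P) • (1 : Ω))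
    {m : Ω} (hZ : W * (Z * m) = 0) (hW : W * m = 0) : m = 0 := by
  have h := quantumDisc_mul_mul hWZ m
  rw [hZ, hW, mul_zero, smul_zero, zero_add] at h
  exact (smul_eq_zero.mp h.symm).resolve_left (sub_ne_zero.mpr hP1.symm)

/-- Consequences in degree two of `dZ = W a`, `dW = Z b` with `da = E`, where the one-forms `a`
and `b` commute with `Z` up to the scalar `P`, and `a` commutes with `W` up to `P⁻¹`. -/
lemma quantumDisc_two_form_relations (hP0 : P ≠ 0) (hP1 : P ≠ 1) (hP2 : P ^ 2 + 1 ≠ 0)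
    (hP3 : P * (P + 1) + 1 ≠ 0) (hWZ : W * Z = P • (Z * W) + (1 - P) • (1 : Ω))
    {a b E : Ω} (haZ : a * Z = P • (Z * a)) (haW : a * W = P⁻¹ • (W * a))
    (hbZ : b * Z = P • (Z * b))
    (hddZ : Z * (b * a) + W * E = 0)
    (hEZ : E * Z - a * (W * a) = P • (W * (a * a)) + P • (Z * E))
    (hEW : E * W - a * (Z * b) = P⁻¹ • (Z * (b * a)) + P⁻¹ • (W * E)) :
    Z * (b * a) = -(P ^ 3 • (Z * (a * b))) ∧
    E = -(Z * (Z * (b * a))) ∧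
    a * a = (P ^ 2 * (1 - P) / (P ^ 2 + 1)) • (Z * (Z * (Z * (Z * (b * a))))) := by
  have hP1' : 1 - P ≠ 0 := sub_ne_zero.mpr hP1.symm
  have haZm (m : Ω) : a * (Z * m) = P • (Z * (a * m)) := by
    rw [← mul_assoc, haZ, smul_mul_assoc, mul_assoc]
  have haWm (m : Ω) : a * (W * m) = P⁻¹ • (W * (a * m)) := by
    rw [← mul_assoc, haW, smul_mul_assoc, mul_assoc]
  have hbZm (m : Ω) : b * (Z * m) = P • (Z * (b * m)) := by
    rw [← mul_assoc, hbZ, smul_mul_assoc, mul_assoc]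
  have hWZm := quantumDisc_mul_mul hWZ
  have hWE : W * E = -(Z * (b * a)) := by
    rw [eq_neg_iff_add_eq_zero, add_comm, hddZ]
  rw [haWm] at hEZ
  rw [haZm, hWE] at hEW
  have hE : E = (-((P ^ 2 + 1) / (P ^ 2 * (1 - P)))) • (W * (W * (a * a))) := by
    have h := congrArg (W * ·) hEZ
    simp only [mul_sub, mul_add, mul_smul_comm, ← mul_assoc W E, hWE, neg_mul, mul_assoc, haZ,
      hbZm, hWZm, mul_neg] at h
    linear_combination (norm := skip) (-(P * (1 - P))⁻¹) • h
    match_scalars <;> field_simp <;> ring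
  have hba : Z * (b * a) = -(P ^ 3 • (Z * (a * b))) := by
    have h : E * W = (P⁻¹ ^ 2) • (W * E) := by
      rw [hE]
      simp only [smul_mul_assoc, mul_assoc, haW, haWm, mul_smul_comm]
      module
    rw [h, hWE] at hEW
    linear_combination (norm := skip) (-P ^ 2) • hEW
    match_scalars <;> field_simp <;> ring
  have hxWaa : Z * (W * (W * (a * a))) = W * (a * a) := by
    have h := hEZ
    rw [hE] at h
    simp only [smul_mul_assoc, mul_assoc, haZ, haZm, mul_smul_comm, hWZm, mul_add,
      smul_add] at h
    linear_combination (norm := skip) (P / ((P ^ 2 + 1) * (P * (P + 1) + 1))) • h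
    match_scalars <;> field_simp <;> ring
  have hxE : Z * (W * E) = E := by
    have h := congrArg (W * ·) hxWaa
    simp only [hWZm] at h
    rw [hE]
    simp only [mul_smul_comm]
    congr 1
    linear_combination (norm := skip) P⁻¹ • h
    match_scalars <;> field_simp <;> ring
  have hxaa : Z * (W * (a * a)) = a * a := by
    have hW : W * (Z * (W * (a * a)) - a * a) = 0 := by
      rw [mul_sub, hWZm, hxWaa]
      module
    have hcomm : (Z * (W * (a * a)) - a * a) * Z =
        P ^ 3 • (Z * (Z * (W * (a * a)) - a * a)) := by
      simp only [sub_mul, mul_sub, mul_assoc, haZ, haZm, mul_smul_comm, hWZm, mul_add]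
      module
    have hZ : W * (Z * (Z * (W * (a * a)) - a * a)) = 0 := by
      have h := congrArg (· * Z) hW
      simp only [mul_assoc W, hcomm, mul_smul_comm, zero_mul] at h
      exact (smul_eq_zero.mp h).resolve_left (pow_ne_zero 3 hP0)
    exact sub_eq_zero.mp (quantumDisc_eq_zero hP1 hWZ hZ hW)
  have hE' : E = -(Z * (Z * (b * a))) := by rw [← hxE, hWE, mul_neg]
  refine ⟨hba, hE', ?_⟩
  have hWWaa : W * (W * (a * a)) = (P ^ 2 * (1 - P) / (P ^ 2 + 1)) • (Z * (Z * (b * a))) := by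
    rw [← neg_eq_iff_eq_neg.mpr hE', hE]
    match_scalars
    field_simp
  rw [← hxaa, ← hxWaa, hWWaa, mul_smul_comm, mul_smul_comm]

end QuantumDisc

theorem full_relations_omega2
    (q : ℝ) (hq0 : 0 < q) (hq1 : q < 1)
    {A : Type*} [Ring A] [Algebra ℂ A]
    (z w : A)
    (hzw : w * z - ((q : ℂ) ^ 2) • (z * w) = ((1 : ℂ) - (q : ℂ) ^ 2) • (1 : A))
    (x : A) (hx : x = 1 - z * w)
    (σ : A ≃ₐ[ℂ] A) (hσz : σ z = ((q : ℂ) ^ 2) • z)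
    (hσw : σ w = (((q : ℂ) ^ 2)⁻¹) • w)
    (D : A →ₗ[ℂ] A)
    (hD : ∀ a b : A, D (a * b) = D a * σ b + a * D b)
    (hDz : D z = w) (hDw : D w = 0)
    (Db : A →ₗ[ℂ] A)
    (hDb : ∀ a b : A, Db (a * b) = Db a * σ b + a * Db b)
    (hDbz : Db z = 0) (hDbw : Db w = ((q : ℂ) ^ 2) • z)
    {Ω : Type*} [Ring Ω] [Algebra ℂ Ω]
    (𝒜 : ℕ → Submodule ℂ Ω)
    (hmul : ∀ {m n : ℕ} {ξ η : Ω}, ξ ∈ 𝒜 m → η ∈ 𝒜 n → ξ * η ∈ 𝒜 (m + n))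
    (ι : A →ₐ[ℂ] Ω) (hι : Function.Injective ι)
    (hι0 : ∀ a : A, ι a ∈ 𝒜 0) (hι0' : ∀ u ∈ 𝒜 0, ∃ a : A, ι a = u)
    (d : Ω →ₗ[ℂ] Ω)
    (hdeg : ∀ {n : ℕ} {ξ : Ω}, ξ ∈ 𝒜 n → d ξ ∈ 𝒜 (n + 1))
    (hdd : ∀ ξ : Ω, d (d ξ) = 0)
    (hLeib : ∀ {n : ℕ} {ξ : Ω}, ξ ∈ 𝒜 n → ∀ η : Ω,
      d (ξ * η) = d ξ * η + ((-1 : ℂ) ^ n) • (ξ * d η))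
    (ω ωb : Ω) (hω : ω ∈ 𝒜 1) (hωb : ωb ∈ 𝒜 1)
    (hωcomm : ∀ a : A, ω * ι a = ι (σ a) * ω)
    (hωbcomm : ∀ a : A, ωb * ι a = ι (σ a) * ωb)
    (hda : ∀ a : A, d (ι a) = ι (D a) * ω + ι (Db a) * ωb)
    (v : Ω)
    (hv : v = ((((q : ℂ) ^ 6)⁻¹) / ((q : ℂ) ^ 2 - 1)) • (ωb * ω + ((q : ℂ) ^ 8) • (ω * ωb)))
    :
    d ω = ((q : ℂ) ^ 8) • (ι (z ^ 2) * v) ∧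
    d ωb = -(ι (w ^ 2) * v) ∧
    ω * ωb = v ∧
    ωb * ω = (-((q : ℂ) ^ 6)) • v ∧
    ω ^ 2 = ((q : ℂ) ^ 12 * (((q : ℂ) ^ 2 - 1) / ((q : ℂ) ^ 4 + 1))) • (ι (z ^ 4) * v) ∧
    ωb ^ 2 = ((((q : ℂ) ^ 4)⁻¹) * (((q : ℂ) ^ 2 - 1) / ((q : ℂ) ^ 4 + 1))) • (ι (w ^ 4) * v) := by
  obtain ⟨P, hP⟩ : ∃ P : ℂ, P = (q : ℂ) ^ 2 := ⟨_, rfl⟩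
  have hPq : P = ((q ^ 2 : ℝ) : ℂ) := by rw [hP]; push_cast; rfl
  have hP0 : P ≠ 0 := by
    rw [hPq]; exact_mod_cast (by positivity : q ^ 2 ≠ 0)
  have hP1 : P ≠ 1 := by
    rw [hPq]; exact_mod_cast (by nlinarith : q ^ 2 < 1).ne
  have hP2 : P ^ 2 + 1 ≠ 0 := by
    rw [hPq]; exact_mod_cast (by positivity : (q ^ 2) ^ 2 + 1 ≠ 0)
  have hP3 : P * (P + 1) + 1 ≠ 0 := by
    rw [hPq]; exact_mod_cast (by positivity : q ^ 2 * (q ^ 2 + 1) + 1 ≠ 0)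
  have hP1' : P - 1 ≠ 0 := sub_ne_zero.mpr hP1
  rw [show (q : ℂ) ^ 4 = P ^ 2 by rw [hP]; ring, show (q : ℂ) ^ 12 = P ^ 6 by rw [hP]; ring]
  rw [show (q : ℂ) ^ 6 = P ^ 3 by rw [hP]; ring, show (q : ℂ) ^ 8 = P ^ 4 by rw [hP]; ring] at hv ⊢
  rw [← hP] at hzw hσz hσw hDbw hv ⊢
  obtain ⟨Z, hZ⟩ : ∃ Z, Z = ι z := ⟨_, rfl⟩
  obtain ⟨W, hW⟩ : ∃ W, W = ι w := ⟨_, rfl⟩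
  have hWZ : W * Z = P • (Z * W) + (1 - P) • (1 : Ω) := by
    have h := congrArg ι hzw
    simp only [map_sub, map_smul, map_mul, map_one, ← hZ, ← hW] at h
    rw [← h]
    abel
  have hdZ : d Z = W * ω := by rw [hZ, hda, hDz, hDbz, hW]; simp
  have hdW : d W = P • (Z * ωb) := by rw [hW, hda, hDw, hDbw, hZ]; simp
  have hZ0 : Z ∈ 𝒜 0 := hZ ▸ hι0 z
  have hW0 : W ∈ 𝒜 0 := hW ▸ hι0 w
  have hLeib0 {ξ : Ω} (hξ : ξ ∈ 𝒜 0) (η : Ω) : d (ξ * η) = d ξ * η + ξ * d η := by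
    simpa using hLeib hξ η
  have hLeib1 {ξ : Ω} (hξ : ξ ∈ 𝒜 1) (η : Ω) : d (ξ * η) = d ξ * η - ξ * d η := by
    simpa [sub_eq_add_neg] using hLeib hξ η
  have hωZ : ω * Z = P • (Z * ω) := by rw [hZ, hωcomm, hσz, map_smul, smul_mul_assoc]
  have hωW : ω * W = P⁻¹ • (W * ω) := by rw [hW, hωcomm, hσw, map_smul, smul_mul_assoc]
  obtain ⟨η, hη⟩ : ∃ η, η = P • ωb := ⟨_, rfl⟩
  have hη1 : η ∈ 𝒜 1 := hη ▸ (𝒜 1).smul_mem P hωb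
  have hηZ : η * Z = P • (Z * η) := by
    rw [hη, hZ, smul_mul_assoc, hωbcomm, hσz, map_smul, smul_mul_assoc, mul_smul_comm]
  have hηW : η * W = P⁻¹ • (W * η) := by
    rw [hη, hW, smul_mul_assoc, hωbcomm, hσw, map_smul, smul_mul_assoc, mul_smul_comm,
      smul_comm P]
  have hdW' : d W = Z * η := by rw [hdW, hη, mul_smul_comm]
  have hddZ : Z * (η * ω) + W * d ω = 0 := by
    rw [← hdd Z, hdZ, hLeib0 hW0, hdW', mul_assoc]
  have hddW : W * (ω * η) + Z * d η = 0 := by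
    rw [← hdd W, hdW', hLeib0 hZ0, hdZ, mul_assoc]
  have hdωZ := congrArg d hωZ
  have hdωW := congrArg d hωW
  have hdηZ := congrArg d hηZ
  have hdηW := congrArg d hηW
  simp only [hLeib1 hω, hLeib1 hη1, hLeib0 hZ0, hLeib0 hW0, map_smul, hdZ, hdW', smul_add,
    mul_assoc] at hdωZ hdωW hdηZ hdηW
  obtain ⟨hZα, hdω, hωω⟩ := quantumDisc_two_form_relations hP0 hP1 hP2 hP3 hWZ hωZ hωW hηZ
    hddZ hdωZ hdωW
  obtain ⟨hWβ, hdη, hηη⟩ := quantumDisc_two_form_relations (inv_ne_zero hP0)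
    (inv_ne_one.mpr hP1)
    (fun h => hP2 (by field_simp at h; linear_combination h))
    (fun h => hP3 (by field_simp at h; linear_combination h))
    (quantumDisc_swap hP0 hWZ) hηW (by rwa [inv_inv]) hωW
    hddW hdηW (by rwa [inv_inv])
  have hηω : η * ω = -(P ^ 3 • (ω * η)) := by
    rw [← sub_eq_zero]
    refine quantumDisc_eq_zero hP1 hWZ ?_ ?_
    · rw [mul_sub, hZα, mul_neg, mul_smul_comm, sub_self, mul_zero]
    · rw [mul_sub, mul_neg, mul_smul_comm, hWβ]
      match_scalars
      field_simp
      ring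
  have hωbω : ωb * ω = -(P ^ 3 • (ω * ωb)) := by
    have h := hηω
    rw [hη, smul_mul_assoc, mul_smul_comm] at h
    linear_combination (norm := skip) P⁻¹ • h
    match_scalars <;> field_simp <;> ring
  have hωωb : ω * ωb = v := by
    rw [hv, hωbω]
    match_scalars
    field_simp
    ring
  have hωη : ω * η = P • v := by rw [hη, mul_smul_comm, hωωb]
  rw [hηω, hωη] at hdω hωω
  rw [hωη] at hdη hηη
  refine ⟨?_, ?_, hωωb, ?_, ?_, ?_⟩
  · rw [hdω, map_pow, ← hZ]
    simp only [pow_succ, pow_zero, one_mul, mul_assoc, mul_neg, mul_smul_comm]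
    module
  · rw [hη, map_smul] at hdη
    rw [map_pow, ← hW]
    simp only [pow_succ, pow_zero, one_mul, mul_assoc, mul_smul_comm] at hdη ⊢
    linear_combination (norm := skip) P⁻¹ • hdη
    match_scalars <;> field_simp <;> ring
  · rw [hωbω, hωωb, neg_smul]
  · rw [pow_two ω, hωω, map_pow, ← hZ]
    simp only [pow_succ, pow_zero, one_mul, mul_assoc, mul_neg, mul_smul_comm]
    match_scalars
    field_simp
    ring
  · have hP2' : 1 + P ^ 2 ≠ 0 := by rwa [add_comm]
    rw [hη] at hηη
    rw [pow_two ωb, map_pow, ← hW]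
    simp only [pow_succ, pow_zero, one_mul, mul_assoc, mul_smul_comm, smul_mul_assoc] at hηη ⊢
    linear_combination (norm := skip) (P⁻¹ * P⁻¹) • hηη
    match_scalars <;> field_simp <;> ring
end
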